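/- arXiv:2503.02001 — 5 statements merged into one kernel-verified Lean document; each statement's English description precedes it below -/
import Mathlib

section
/- Let F be a finite field, C ⊆ F^n a linear code, and r, t positive integers. Then C is an (r,t)-SLRC if and only if for every nonempty subset I ⊆ [n] with |I| ≤ t there exists an i ∈ I that has an r-recovery set R_i ⊆ [n]\I. -/
/-!
For the forward direction, the first element of a recovery order of `I` has a recovery set that
avoids `I`, since nothing precedes it. Conversely, a recovery order of `I` is built by strong
induction on `I`: put first some `i ∈ I` with a recovery set outside `I`, and continue with a
recovery order of `I \ {i}`.
-/

/-- `R` is an `r`-recovery set for coordinate `i` of the code `C ⊆ F^n`: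
`R ⊆ [n] \ {i}`, `|R| ≤ r`, and there are coefficients `a_j` with
`x i = ∑_{j ∈ R} a_j * x j` for every codeword `x ∈ C`. -/
def RecSet {F : Type*} [Field F] {n : ℕ} (C : Set (Fin n → F)) (r : ℕ)
    (i : Fin n) (R : Finset (Fin n)) : Prop :=
  i ∉ R ∧ R.card ≤ r ∧ ∃ a : Fin n → F, ∀ x ∈ C, x i = ∑ j ∈ R, a j * x j

/-- `C` is an `(r, t)`-sequential locally recoverable code: every set `I` of at most `t`
coordinates can be ordered as `i_1, …, i_m` so that each `i_j` has an `r`-recovery set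
contained in `([n] \ I) ∪ {i_1, …, i_{j-1}}`. -/
def IsSLRC {F : Type*} [Field F] {n : ℕ} (C : Set (Fin n → F)) (r t : ℕ) : Prop :=
  ∀ I : Finset (Fin n), I.card ≤ t →
    ∃ l : List (Fin n), l.Nodup ∧ l.toFinset = I ∧
      ∀ j : Fin l.length, ∃ R : Finset (Fin n),
        RecSet C r (l.get j) R ∧ ∀ x ∈ R, x ∉ I ∨ x ∈ l.take (j : ℕ)

/-- A linear code `C ⊆ F^n` over a finite field is an `(r,t)`-SLRC iff for every nonempty
`I ⊆ [n]` with `|I| ≤ t` there is some `i ∈ I` having an `r`-recovery set `R ⊆ [n] \ I`. -/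
theorem statement0 {F : Type*} [Field F] [Fintype F] {n : ℕ}
    (C : Submodule F (Fin n → F)) (r t : ℕ) (hr : 0 < r) (ht : 0 < t) :
    IsSLRC (C : Set (Fin n → F)) r t ↔
      (∀ I : Finset (Fin n), I.Nonempty → I.card ≤ t →
        ∃ i ∈ I, ∃ R : Finset (Fin n),
          RecSet (C : Set (Fin n → F)) r i R ∧ ∀ x ∈ R, x ∉ I) := by
  constructor
  · intro h I hne hcard
    obtain ⟨l, -, hl, hrec⟩ := h I hcard
    have hpos : 0 < l.length := by
      rw [List.length_pos_iff]
      rintro rfl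
      simp [← hl] at hne
    obtain ⟨R, hR, hsub⟩ := hrec ⟨0, hpos⟩
    refine ⟨l.get ⟨0, hpos⟩, ?_, R, hR, fun x hx => ?_⟩
    · rw [← hl, List.mem_toFinset]
      exact List.get_mem _ _
    · simpa using hsub x hx
  · intro h I
    induction I using Finset.strongInduction with
    | H I ih =>
      intro hcard
      rcases I.eq_empty_or_nonempty with rfl | hne
      · exact ⟨[], by simp, by simp, fun j => j.elim0⟩
      · obtain ⟨i, hi, R, hR, hsub⟩ := h I hne hcard
        obtain ⟨l, hnd, hl, hrec⟩ := ih (I.erase i) (Finset.erase_ssubset hi)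
          ((Finset.card_erase_le).trans hcard)
        have hil : i ∉ l := by
          rw [← List.mem_toFinset, hl]
          simp
        refine ⟨i :: l, List.nodup_cons.2 ⟨hil, hnd⟩, ?_, ?_⟩
        · rw [List.toFinset_cons, hl, Finset.insert_erase hi]
        · rintro ⟨_ | j, hj⟩
          · exact ⟨R, hR, fun x hx => Or.inl (hsub x hx)⟩
          · obtain ⟨R', hR', hsub'⟩ := hrec ⟨j, by simpa using hj⟩
            refine ⟨R', hR', fun x hx => ?_⟩
            -- outside `I.erase i` means outside `I` or equal to `i`, the head of the new list
            have := hsub' x hx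
            simp only [Finset.mem_erase, List.take_succ_cons, List.mem_cons] at this ⊢
            tauto
end

section
/- Let C ⊆ F^n be the code with parity-check matrix H produced by the construction (Algorithm 1). Then every information coordinate i ∈ [k] has t_i pairwise disjoint r-recovery sets: if L_{j_1},…,L_{j_{t_i}} are the t_i lines of the design containing i, then the sets R_ℓ = (L_{j_ℓ} \ {i}) ∪ {k + (j_ℓ − 1)(δ−1) + 1}, for ℓ = 1,…,t_i, are pairwise disjoint, each has exactly r elements, and each is an r-recovery set for i. -/
/-!
Fix a line `L j` through `i` and look at the parity check in the first row `j(δ-1)` of the `j`-th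
row block of `H`. It is supported on `L j ∪ {k + j(δ-1)}` (`Hval_support`), so it can be solved for
`x i` in terms of the coordinates in `R j` as soon as its coefficient at `i` is nonzero. That
coefficient is an entry of `Q`, and every entry of `Q` is nonzero (`entry_ne_zero`): if `Q ρ l = 0`,
the codeword of the MDS code which encodes the `l`-th unit vector would have weight at most `δ - 1`.

The sets `R j` are disjoint since two lines through `i` share no other point, while the parity
columns `k + j(δ-1)` lie outside `[k]` and are distinct for distinct `j`.
-/

/-- `b = s · t_i` where `s = k / r`: the number of lines of the resolvable design. -/
def bVal (r ti k : ℕ) : ℕ := k / r * ti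

/-- `c = ⌈s / r⌉` where `s = k / r`. -/
def cVal (r k : ℕ) : ℕ := (k / r + r - 1) / r

/-- Block length `n = k + b(δ-1) + ⌈s/r⌉(δ-1)` of the constructed code. -/
def nVal (r δ ti k : ℕ) : ℕ := k + bVal r ti k * (δ - 1) + cVal r k * (δ - 1)

/-- Number of rows `(b + ⌈s/r⌉)(δ-1)` of the parity-check matrix `H`. -/
def mVal (r δ ti k : ℕ) : ℕ := (bVal r ti k + cVal r k) * (δ - 1)

/-- Entry of the parity-check matrix `H` of Algorithm 1 (0-indexed rows `ρ` and
columns `γ`).  For `ρ` in the `j`-th of the first `b` row blocks (each of `δ-1` rows):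
the columns indexed by the line `L j` carry the columns of `Q` (the ℓ-th smallest point
of `L j` receiving the ℓ-th column of `Q`), columns `k + j(δ-1), …, k + (j+1)(δ-1) - 1`
carry the identity, and all other entries vanish.  The last `⌈s/r⌉(δ-1)` rows carry a
block-diagonal matrix of copies of `Q` in columns `k, …, k + ⌈s/r⌉·r - 1` and the
identity in the last `⌈s/r⌉(δ-1)` columns. -/
def Hval (F : Type*) [Field F] (r δ ti k : ℕ)
    (Q : Matrix (Fin (δ - 1)) (Fin r) F) (L : ℕ → Finset ℕ) (ρ γ : ℕ) : F :=
  if ρ < bVal r ti k * (δ - 1) then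
    (if γ < k then
      (if γ ∈ L (ρ / (δ - 1)) then
        (if h : ρ % (δ - 1) < δ - 1 ∧ ((L (ρ / (δ - 1))).filter (fun x => x < γ)).card < r then
          Q ⟨ρ % (δ - 1), h.1⟩ ⟨((L (ρ / (δ - 1))).filter (fun x => x < γ)).card, h.2⟩
        else 0)
      else 0)
    else if γ < k + bVal r ti k * (δ - 1) then (if γ = k + ρ then (1 : F) else 0)
    else 0)
  else
    (if γ < k then 0
    else if γ < k + cVal r k * r then
      (if (γ - k) / r = (ρ - bVal r ti k * (δ - 1)) / (δ - 1) then
        (if h : (ρ - bVal r ti k * (δ - 1)) % (δ - 1) < δ - 1 ∧ (γ - k) % r < r then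
          Q ⟨(ρ - bVal r ti k * (δ - 1)) % (δ - 1), h.1⟩ ⟨(γ - k) % r, h.2⟩
        else 0)
      else 0)
    else if γ < k + bVal r ti k * (δ - 1) then 0
    else (if γ = k + bVal r ti k * (δ - 1) + (ρ - bVal r ti k * (δ - 1)) then (1 : F) else 0))

/-- The parity-check matrix `H` produced by Algorithm 1. -/
def Hmat (F : Type*) [Field F] (r δ ti k : ℕ)
    (Q : Matrix (Fin (δ - 1)) (Fin r) F) (L : ℕ → Finset ℕ) :
    Matrix (Fin (mVal r δ ti k)) (Fin (nVal r δ ti k)) F :=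
  Matrix.of fun ρ γ => Hval F r δ ti k Q L (ρ : ℕ) (γ : ℕ)

/-- The code `C = {x ∈ F^n : H x = 0}` produced by Algorithm 1. -/
noncomputable def codeC (F : Type*) [Field F] (r δ ti k : ℕ)
    (Q : Matrix (Fin (δ - 1)) (Fin r) F) (L : ℕ → Finset ℕ) :
    Submodule F (Fin (nVal r δ ti k) → F) :=
  LinearMap.ker (Matrix.mulVecLin (Hmat F r δ ti k Q L))

/-- If `[Q ∣ I]` is the parity-check matrix of a code of minimum distance at least `d + 1`, where `d`
is the number of rows, then no entry of `Q` vanishes. -/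
theorem entry_ne_zero {F : Type*} [Field F] {r d : ℕ} (Q : Matrix (Fin d) (Fin r) F)
    (hQ : ∀ x : Fin (r + d) → F,
        (∀ ρ : Fin d,
          (∑ l : Fin r, Q ρ l * x (Fin.castAdd d l)) + x (Fin.natAdd r ρ) = 0) →
        x ≠ 0 → d + 1 ≤ {i : Fin (r + d) | x i ≠ 0}.ncard)
    (ρ : Fin d) (l : Fin r) : Q ρ l ≠ 0 := by
  intro h0
  -- the systematic encoding of the `l`-th unit vector
  let x : Fin (r + d) → F :=
    Fin.addCases (fun l' => if l' = l then 1 else 0) (fun ρ' => - Q ρ' l)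
  have hxl : ∀ l', x (Fin.castAdd d l') = if l' = l then 1 else 0 := fun l' => by simp [x]
  have hxr : ∀ ρ', x (Fin.natAdd r ρ') = - Q ρ' l := fun ρ' => by simp [x]
  have hne : x ≠ 0 := by
    intro h
    have := hxl l
    simp [h] at this
  have hw := hQ x (fun ρ' => by simp [hxl, hxr]) hne
  -- its support meets the first `r` coordinates only in `l` and misses the check `ρ`
  have hsub : {i : Fin (r + d) | x i ≠ 0} ⊆
      (insert (Fin.castAdd d l)
        ((Finset.univ.erase ρ).image (Fin.natAdd r)) : Finset (Fin (r + d))) := by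
    intro i hi
    induction i using Fin.addCases with
    | left l' =>
      have : l' = l := by
        by_contra hl
        exact hi (by simp [hxl, hl])
      simp [this]
    | right ρ' =>
      have : ρ' ≠ ρ := by
        rintro rfl
        exact hi (by simp [hxr, h0])
      simp [this]
  have h1 := Set.ncard_le_ncard hsub (Finset.finite_toSet _)
  rw [Set.ncard_coe_finset] at h1
  have h2 := Finset.card_insert_le (Fin.castAdd d l) ((Finset.univ.erase ρ).image (Fin.natAdd r))
  have h3 := Finset.card_image_le (s := Finset.univ.erase ρ) (f := Fin.natAdd r)
  have h4 : (Finset.univ.erase ρ).card = d - 1 := by simp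
  have := ρ.pos
  omega

/-- The first row of the `j`-th row block of `H` vanishes outside `L j ∪ {k + j(δ-1)}`. -/
theorem Hval_support {F : Type*} [Field F] {r δ ti k : ℕ} (hδ : 2 ≤ δ)
    (Q : Matrix (Fin (δ - 1)) (Fin r) F) (L : ℕ → Finset ℕ) {j γ : ℕ} (hj : j < bVal r ti k)
    (hγL : γ ∉ L j) (hγ : γ ≠ k + j * (δ - 1)) :
    Hval F r δ ti k Q L (j * (δ - 1)) γ = 0 := by
  have hd : 0 < δ - 1 := by omega
  have hlt : j * (δ - 1) < bVal r ti k * (δ - 1) := Nat.mul_lt_mul_of_pos_right hj hd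
  simp [Hval, hlt, Nat.mul_div_cancel j hd, hγL, hγ]

/-- On the points of `L j`, the first row of the `j`-th row block of `H` carries entries of `Q`, hence
nonzero values. -/
theorem Hval_ne_zero {F : Type*} [Field F] {r δ ti k : ℕ} (hδ : 2 ≤ δ)
    (Q : Matrix (Fin (δ - 1)) (Fin r) F) (hQ : ∀ ρ l, Q ρ l ≠ 0) (L : ℕ → Finset ℕ) {j γ : ℕ}
    (hj : j < bVal r ti k) (hcard : (L j).card = r) (hγk : γ < k) (hγ : γ ∈ L j) :
    Hval F r δ ti k Q L (j * (δ - 1)) γ ≠ 0 := by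
  have hd : 0 < δ - 1 := by omega
  have hlt : j * (δ - 1) < bVal r ti k * (δ - 1) := Nat.mul_lt_mul_of_pos_right hj hd
  have hpos : ((L j).filter (fun x => x < γ)).card < r := by
    rw [← hcard]
    refine Finset.card_lt_card (Finset.filter_ssubset.2 ⟨γ, hγ, lt_irrefl _⟩)
  simp only [Hval, hlt, hγk, if_true, Nat.mul_div_cancel j hd, hγ]
  rw [dif_pos ⟨Nat.mod_lt _ hd, hpos⟩]
  exact hQ _ _

/-- Lemma 2(1): every information coordinate `i < k` has `t_i` pairwise disjoint
`r`-recovery sets: for each line `L j` containing `i`, the set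
`R j = (L j \ {i}) ∪ {k + j(δ-1)}` has exactly `r` elements, is an `r`-recovery set
for `i`, and these sets are pairwise disjoint over the lines containing `i`. -/
theorem statement2 {F : Type*} [Field F] [Fintype F]
    (r δ ti k : ℕ) (hr : 2 ≤ r) (hδ : 2 ≤ δ) (hti : 2 ≤ ti) (hk : r ∣ k)
    (Q : Matrix (Fin (δ - 1)) (Fin r) F)
    -- `Q` is the parity part of a parity-check matrix `[Q ∣ I_{δ-1}]` of an
    -- `[r+δ-1, r, δ]` MDS code: the kernel code has minimum Hamming distance exactly `δ`.
    (hQ : (∀ x : Fin (r + (δ - 1)) → F,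
        (∀ ρ : Fin (δ - 1),
          (∑ l : Fin r, Q ρ l * x (Fin.castAdd (δ - 1) l)) + x (Fin.natAdd r ρ) = 0) →
        x ≠ 0 → δ ≤ {i : Fin (r + (δ - 1)) | x i ≠ 0}.ncard) ∧
      (∃ x : Fin (r + (δ - 1)) → F,
        (∀ ρ : Fin (δ - 1),
          (∑ l : Fin r, Q ρ l * x (Fin.castAdd (δ - 1) l)) + x (Fin.natAdd r ρ) = 0) ∧
        x ≠ 0 ∧ {i : Fin (r + (δ - 1)) | x i ≠ 0}.ncard = δ))
    (L : ℕ → Finset ℕ)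
    -- `L 0, …, L (b-1)` are the lines of a `(t_i, r)`-resolvable design on `{0, …, k-1}`:
    (hLsub : ∀ j < bVal r ti k, L j ⊆ Finset.range k)
    (hLcard : ∀ j < bVal r ti k, (L j).card = r)
    (hpt : ∀ p < k, ((Finset.range (bVal r ti k)).filter (fun j => p ∈ L j)).card = ti)
    (hmeet : ∀ j < bVal r ti k, ∀ j' < bVal r ti k, j ≠ j' → (L j ∩ L j').card ≤ 1)
    (hres : ∃ cls : ℕ → ℕ, (∀ j < bVal r ti k, cls j < ti) ∧
      ∀ m < ti, ∀ p < k, ∃! j, j < bVal r ti k ∧ cls j = m ∧ p ∈ L j)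
    -- `⌈s/r⌉ · r ≤ b(δ-1)`:
    (hcr : cVal r k * r ≤ bVal r ti k * (δ - 1))
    :
    ∀ i : Fin (nVal r δ ti k), (i : ℕ) < k →
      ∃ R : ℕ → Finset (Fin (nVal r δ ti k)),
        (∀ j < bVal r ti k, (i : ℕ) ∈ L j →
          (∀ x : Fin (nVal r δ ti k),
            x ∈ R j ↔ (((x : ℕ) ∈ L j ∧ (x : ℕ) ≠ (i : ℕ)) ∨ (x : ℕ) = k + j * (δ - 1))) ∧
          (R j).card = r ∧
          RecSet (codeC F r δ ti k Q L : Set (Fin (nVal r δ ti k) → F)) r i (R j)) ∧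
        (∀ j < bVal r ti k, ∀ j' < bVal r ti k, j ≠ j' →
          (i : ℕ) ∈ L j → (i : ℕ) ∈ L j' → Disjoint (R j) (R j')) := by
  intro i hik
  have hd : 0 < δ - 1 := by omega
  have hQ0 : ∀ ρ l, Q ρ l ≠ 0 := entry_ne_zero Q (fun x hx hx0 => by
    have := hQ.1 x hx hx0
    omega)
  have hlt : ∀ j < bVal r ti k, j * (δ - 1) < bVal r ti k * (δ - 1) :=
    fun j hj => Nat.mul_lt_mul_of_pos_right hj hd
  have hLk : ∀ j < bVal r ti k, ∀ p ∈ L j, p < k :=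
    fun j hj p hp => Finset.mem_range.1 (hLsub j hj hp)
  let R : ℕ → Finset (Fin (nVal r δ ti k)) := fun j =>
    Finset.univ.filter fun x => ((x : ℕ) ∈ L j ∧ (x : ℕ) ≠ (i : ℕ)) ∨ (x : ℕ) = k + j * (δ - 1)
  have hR : ∀ j x, x ∈ R j ↔
      (((x : ℕ) ∈ L j ∧ (x : ℕ) ≠ (i : ℕ)) ∨ (x : ℕ) = k + j * (δ - 1)) := by
    intro j x
    simp [R]
  refine ⟨R, ?_, ?_⟩
  · intro j hj hij
    have hjlt := hlt j hj
    have hcard : (R j).card = r := by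
      have himg : (R j).map Fin.valEmbedding = insert (k + j * (δ - 1)) ((L j).erase i) := by
        ext y
        simp only [Finset.mem_map, hR, Fin.valEmbedding_apply, Finset.mem_insert,
          Finset.mem_erase]
        constructor
        · rintro ⟨x, hx, rfl⟩
          tauto
        · intro hy
          have hyn : y < nVal r δ ti k := by
            unfold nVal
            rcases hy with rfl | ⟨-, hy⟩
            · omega
            · have := hLk j hj y hy
              omega
          exact ⟨⟨y, hyn⟩, by simp only; tauto, rfl⟩
      have hnot : k + j * (δ - 1) ∉ (L j).erase i := by
        intro h
        have := hLk j hj _ (Finset.mem_of_mem_erase h)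
        omega
      rw [← Finset.card_map Fin.valEmbedding, himg, Finset.card_insert_of_notMem hnot,
        Finset.card_erase_of_mem hij, hLcard j hj]
      omega
    have hiR : i ∉ R j := by
      rw [hR]
      omega
    refine ⟨hR j, hcard, hiR, hcard.le, ?_⟩
    have hρ : j * (δ - 1) < mVal r δ ti k := by
      unfold mVal
      rw [add_mul]
      omega
    have hne := Hval_ne_zero hδ Q hQ0 L hj (hLcard j hj) hik hij
    set h := Hval F r δ ti k Q L (j * (δ - 1)) with hh
    -- solve the parity check of row `j(δ-1)` for `x i`
    refine ⟨fun γ => -(h i)⁻¹ * h γ, fun x hx => ?_⟩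
    have hx0 : ∑ γ : Fin (nVal r δ ti k), h γ * x γ = 0 := by
      have hx' : (Hmat F r δ ti k Q L).mulVec x = 0 := hx
      exact congrFun hx' ⟨j * (δ - 1), hρ⟩
    have hsum : ∑ γ ∈ insert i (R j), h γ * x γ = 0 := by
      rw [← hx0]
      refine Finset.sum_subset (Finset.subset_univ _) fun γ _ hγ => ?_
      rw [Finset.mem_insert, hR, Fin.ext_iff] at hγ
      have hz : h γ = 0 := Hval_support hδ Q L hj (fun hγL => hγ (by tauto)) (by tauto)
      rw [hz, zero_mul]
    rw [Finset.sum_insert hiR] at hsum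
    simp only [mul_assoc]
    rw [← Finset.mul_sum, ← neg_eq_of_add_eq_zero_right hsum]
    field_simp
  · intro j hj j' hj' hjj hij hij'
    rw [Finset.disjoint_left]
    intro x hx hx'
    rw [hR] at hx hx'
    rcases hx with ⟨hxL, hxi⟩ | hx <;> rcases hx' with ⟨hxL', -⟩ | hx'
    · exact hxi (Finset.card_le_one.1 (hmeet j hj j' hj' hjj) _
        (Finset.mem_inter.2 ⟨hxL, hxL'⟩) _ (Finset.mem_inter.2 ⟨hij, hij'⟩))
    · have := hLk j hj _ hxL
      omega
    · have := hLk j' hj' _ hxL'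
      omega
    · exact hjj (Nat.eq_of_mul_eq_mul_right hd (by omega))
end

section
/- Let C ⊆ F^n be the code with parity-check matrix H produced by the construction (Algorithm 1). Then every coordinate i ∈ {k+1,…,k+⌈s/r⌉·r} has an r-recovery set contained in ({k+1,…,k+⌈s/r⌉·r} ∪ {k+b(δ−1)+1,…,n}) \ {i}. -/
/-- If `Q ρ₀ l = 0`, the codeword of `[Q ∣ I]` with information part `e_l` has weight at most
`1 + (d - 1) = d`, contradicting minimum distance at least `d + 1`. -/
lemma mds_entry_ne_zero {F : Type*} [Field F] {r d : ℕ} (Q : Matrix (Fin d) (Fin r) F)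
    (hQ : ∀ x : Fin (r + d) → F,
      (∀ ρ : Fin d, (∑ l : Fin r, Q ρ l * x (Fin.castAdd d l)) + x (Fin.natAdd r ρ) = 0) →
      x ≠ 0 → d + 1 ≤ {i : Fin (r + d) | x i ≠ 0}.ncard)
    (ρ₀ : Fin d) (l : Fin r) : Q ρ₀ l ≠ 0 := by
  intro h0
  let x : Fin (r + d) → F := Fin.append (Pi.single l 1) (fun ρ => -Q ρ l)
  have hx : x ≠ 0 := by
    intro h
    have := congrFun h (Fin.castAdd d l)
    simp [x] at this
  have hle := hQ x (fun ρ => by simp [x, Pi.single_apply]) hx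
  have hsub : {i : Fin (r + d) | x i ≠ 0} ⊆
      ((insert (Fin.castAdd d l) ((Finset.univ.erase ρ₀).image (Fin.natAdd r)) :
        Finset (Fin (r + d))) : Set (Fin (r + d))) := by
    intro i hi
    simp only [Set.mem_ofPred_eq] at hi
    induction i using Fin.addCases with
    | left j =>
      have hj : j = l := by
        by_contra hne
        exact hi (by simp [x, hne])
      simp [hj]
    | right j =>
      have hj : j ≠ ρ₀ := by
        rintro rfl
        exact hi (by simp [x, h0])
      simp [hj]
  have h1 := Set.ncard_le_ncard hsub (Finset.finite_toSet _)
  rw [Set.ncard_coe_finset] at h1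
  have h2 := Finset.card_insert_le (Fin.castAdd d l)
    ((Finset.univ.erase ρ₀).image (Fin.natAdd r))
  have h3 : ((Finset.univ.erase ρ₀).image (Fin.natAdd r)).card ≤ d - 1 :=
    Finset.card_image_le.trans (by simp)
  have := ρ₀.pos
  omega

/-- A parity check `h` with `h i ≠ 0` whose support lies in a set `S` of at most `r + 1` column
indices yields an `r`-recovery set for `i` inside `S`. -/
lemma recSet_of_parity_check {F : Type*} [Field F] {n : ℕ} (C : Set (Fin n → F)) (r : ℕ)
    (h : Fin n → F) (hC : ∀ x ∈ C, ∑ j, h j * x j = 0) (i : Fin n) (hi : h i ≠ 0)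
    (S : Finset ℕ) (hS : ∀ j, h j ≠ 0 → (j : ℕ) ∈ S) (hcard : S.card ≤ r + 1) :
    ∃ R : Finset (Fin n), RecSet C r i R ∧ ∀ x ∈ R, (x : ℕ) ∈ S := by
  classical
  refine ⟨(Finset.univ.filter fun j => h j ≠ 0).erase i,
    ⟨by simp, ?_, fun j => -(h j) / h i, ?_⟩, ?_⟩
  · have hsub : ((Finset.univ.filter fun j => h j ≠ 0).erase i).image (fun j : Fin n => (j : ℕ)) ⊆
        S.erase i := by
      intro y hy
      obtain ⟨j, hj, rfl⟩ := Finset.mem_image.1 hy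
      simp only [Finset.mem_erase, Finset.mem_filter, Finset.mem_univ, true_and] at hj
      exact Finset.mem_erase.2 ⟨fun e => hj.1 (Fin.ext e), hS j hj.2⟩
    have h1 := Finset.card_le_card hsub
    rw [Finset.card_image_of_injective _ Fin.val_injective, Finset.card_erase_of_mem (hS i hi)] at h1
    omega
  · intro x hx
    have h0 := hC x hx
    have h1 : ∑ j ∈ Finset.univ.filter (fun j => h j ≠ 0), h j * x j = 0 := by
      refine Eq.trans ?_ h0
      refine Finset.sum_subset (Finset.subset_univ _) fun j _ hj => ?_
      simp only [Finset.mem_filter, Finset.mem_univ, true_and, not_not] at hj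
      simp [hj]
    rw [← Finset.add_sum_erase _ _ (by simpa using hi : i ∈ Finset.univ.filter (fun j => h j ≠ 0))]
      at h1
    have h2 : ∀ j, -(h j) / h i * x j = (-(h i)⁻¹) * (h j * x j) := fun j => by ring
    simp only [h2]
    rw [← Finset.mul_sum, eq_neg_of_add_eq_zero_right h1]
    field_simp
  · intro x hx
    simp only [Finset.mem_erase, Finset.mem_filter, Finset.mem_univ, true_and] at hx
    exact hS x hx.2

/-- Lemma 2(3): every coordinate `i` with `k ≤ i < k + ⌈s/r⌉·r` has an `r`-recovery set
contained in `({k, …, k + ⌈s/r⌉·r - 1} ∪ {k + b(δ-1), …, n-1}) \ {i}`. -/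
theorem statement4 {F : Type*} [Field F] [Fintype F]
    (r δ ti k : ℕ) (hr : 2 ≤ r) (hδ : 2 ≤ δ) (hti : 2 ≤ ti) (hk : r ∣ k)
    (Q : Matrix (Fin (δ - 1)) (Fin r) F)
    -- `Q` is the parity part of a parity-check matrix `[Q ∣ I_{δ-1}]` of an
    -- `[r+δ-1, r, δ]` MDS code: the kernel code has minimum Hamming distance exactly `δ`.
    (hQ : (∀ x : Fin (r + (δ - 1)) → F,
        (∀ ρ : Fin (δ - 1),
          (∑ l : Fin r, Q ρ l * x (Fin.castAdd (δ - 1) l)) + x (Fin.natAdd r ρ) = 0) →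
        x ≠ 0 → δ ≤ {i : Fin (r + (δ - 1)) | x i ≠ 0}.ncard) ∧
      (∃ x : Fin (r + (δ - 1)) → F,
        (∀ ρ : Fin (δ - 1),
          (∑ l : Fin r, Q ρ l * x (Fin.castAdd (δ - 1) l)) + x (Fin.natAdd r ρ) = 0) ∧
        x ≠ 0 ∧ {i : Fin (r + (δ - 1)) | x i ≠ 0}.ncard = δ))
    (L : ℕ → Finset ℕ)
    -- `L 0, …, L (b-1)` are the lines of a `(t_i, r)`-resolvable design on `{0, …, k-1}`:
    (hLsub : ∀ j < bVal r ti k, L j ⊆ Finset.range k)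
    (hLcard : ∀ j < bVal r ti k, (L j).card = r)
    (hpt : ∀ p < k, ((Finset.range (bVal r ti k)).filter (fun j => p ∈ L j)).card = ti)
    (hmeet : ∀ j < bVal r ti k, ∀ j' < bVal r ti k, j ≠ j' → (L j ∩ L j').card ≤ 1)
    (hres : ∃ cls : ℕ → ℕ, (∀ j < bVal r ti k, cls j < ti) ∧
      ∀ m < ti, ∀ p < k, ∃! j, j < bVal r ti k ∧ cls j = m ∧ p ∈ L j)
    -- `⌈s/r⌉ · r ≤ b(δ-1)`:
    (hcr : cVal r k * r ≤ bVal r ti k * (δ - 1))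
    :
    ∀ i : Fin (nVal r δ ti k), k ≤ (i : ℕ) → (i : ℕ) < k + cVal r k * r →
      ∃ R : Finset (Fin (nVal r δ ti k)),
        RecSet (codeC F r δ ti k Q L : Set (Fin (nVal r δ ti k) → F)) r i R ∧
        ∀ x ∈ R, (k ≤ (x : ℕ) ∧ (x : ℕ) < k + cVal r k * r) ∨
          k + bVal r ti k * (δ - 1) ≤ (x : ℕ) := by
  intro i hki hik
  have hd : 0 < δ - 1 := by omega
  have hr0 : 0 < r := by omega
  have hm : ((i : ℕ) - k) / r < cVal r k := by
    rw [Nat.div_lt_iff_lt_mul hr0]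
    omega
  set m := ((i : ℕ) - k) / r with hmdef
  -- The first row of the `m`-th of the last `⌈s/r⌉` row blocks.
  have hrow : bVal r ti k * (δ - 1) + m * (δ - 1) < mVal r δ ti k := by
    have := Nat.mul_lt_mul_of_pos_right hm hd
    unfold mVal
    rw [Nat.add_mul]
    omega
  let ρ : Fin (mVal r δ ti k) := ⟨bVal r ti k * (δ - 1) + m * (δ - 1), hrow⟩
  have hent : ∀ γ : Fin (nVal r δ ti k), Hmat F r δ ti k Q L ρ γ =
      if (γ : ℕ) < k then 0
      else if (γ : ℕ) < k + cVal r k * r then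
        (if ((γ : ℕ) - k) / r = m then Q ⟨0, hd⟩ ⟨((γ : ℕ) - k) % r, Nat.mod_lt _ hr0⟩ else 0)
      else if (γ : ℕ) < k + bVal r ti k * (δ - 1) then 0
      else if (γ : ℕ) = k + bVal r ti k * (δ - 1) + m * (δ - 1) then 1 else 0 := by
    intro γ
    simp [Hmat, Hval, ρ, Nat.mul_div_cancel _ hd, hd, Nat.mod_lt _ hr0]
  have hQ0 : ∀ l, Q ⟨0, hd⟩ l ≠ 0 := fun l =>
    mds_entry_ne_zero Q (fun x h1 h2 => by
      have := hQ.1 x h1 h2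
      omega) _ l
  obtain ⟨R, hR, hRS⟩ := recSet_of_parity_check
    (codeC F r δ ti k Q L : Set (Fin (nVal r δ ti k) → F)) r
    (fun γ => Hmat F r δ ti k Q L ρ γ)
    (fun x hx => by
      have h0 : Matrix.mulVec (Hmat F r δ ti k Q L) x = 0 := by
        simpa [codeC] using hx
      exact congrFun h0 ρ)
    i
    (by
      simp only [hent]
      rw [if_neg (by omega), if_pos hik, if_pos hmdef.symm]
      exact hQ0 _)
    (insert (k + bVal r ti k * (δ - 1) + m * (δ - 1)) (Finset.Ico (k + m * r) (k + m * r + r)))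
    (fun j hj => by
      simp only [hent] at hj
      rw [Finset.mem_insert, Finset.mem_Ico]
      by_cases h3 : ((j : ℕ) - k) / r = m
      · by_cases h5 : (j : ℕ) = k + bVal r ti k * (δ - 1) + m * (δ - 1)
        · exact Or.inl h5
        · right
          have h1 : ¬ (j : ℕ) < k := fun h => by simp [h] at hj
          have e1 := Nat.div_add_mod' ((j : ℕ) - k) r
          have e2 := Nat.mod_lt ((j : ℕ) - k) hr0
          rw [h3] at e1
          omega
      · left
        by_contra h5
        simp [h3, h5] at hj)
    ((Finset.card_insert_le _ _).trans (by simp))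
  refine ⟨R, hR, fun x hx => ?_⟩
  have hxS := hRS x hx
  rw [Finset.mem_insert, Finset.mem_Ico] at hxS
  rcases hxS with h | h
  · right
    omega
  · left
    have : (m + 1) * r ≤ cVal r k * r := Nat.mul_le_mul_right r hm
    rw [Nat.add_mul] at this
    omega
end

section
/- Let C ⊆ F^n be the code with parity-check matrix H produced by the construction (Algorithm 1). For each j ∈ [b] let B_j = {k+(j−1)(δ−1)+1,…,k+j(δ−1)} and S_j = L_j ∪ B_j, a set of size r+δ−1. Then: (a) for every j ∈ [b], the punctured subcode C|_{S_j} (the image of C under projection onto the coordinates in S_j) has minimum Hamming distance exactly δ; and (b) for every information coordinate i ∈ [k], if L_{j_1},…,L_{j_{t_i}} are the t_i lines containing i, then S_{j_ℓ} ∩ S_{j_{ℓ'}} = {i} for all ℓ ≠ ℓ'. Hence each information symbol of C is contained in t_i punctured subcodes of length r+δ−1 and minimum distance δ whose supports pairwise intersect only in that coordinate. -/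
/-- The support `S_j = L_j ∪ B_j` of the `j`-th local subcode, where
`B_j = {k + j(δ-1), …, k + (j+1)(δ-1) - 1}` is the `j`-th block of parity coordinates. -/
def Sset (δ k : ℕ) (L : ℕ → Finset ℕ) (j : ℕ) : Finset ℕ :=
  L j ∪ Finset.Ico (k + j * (δ - 1)) (k + j * (δ - 1) + (δ - 1))

/-! ### Enumeration of the local supports -/

/-- Enumeration of `S_j`: the points of the line `A` in increasing order, followed by the `d`
parity coordinates `k + j * d, …, k + j * d + d - 1`. -/
def locIdx (r d k j : ℕ) (A : Finset ℕ) (hA : A.card = r) : Fin (r + d) → ℕ :=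
  Fin.addCases (fun l => A.orderEmbOfFin hA l) (fun ρ => k + j * d + ρ)

theorem locIdx_left (r d k j : ℕ) (A : Finset ℕ) (hA : A.card = r) (l : Fin r) :
    locIdx r d k j A hA (Fin.castAdd d l) = A.orderEmbOfFin hA l := by
  simp [locIdx]

theorem locIdx_right (r d k j : ℕ) (A : Finset ℕ) (hA : A.card = r) (ρ : Fin d) :
    locIdx r d k j A hA (Fin.natAdd r ρ) = k + j * d + ρ := by
  simp [locIdx]

theorem locIdx_injective (r d k j : ℕ) (A : Finset ℕ) (hA : A.card = r)
    (hsub : A ⊆ Finset.range k) : Function.Injective (locIdx r d k j A hA) := by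
  have hlt (l : Fin r) : A.orderEmbOfFin hA l < k :=
    Finset.mem_range.1 (hsub (A.orderEmbOfFin_mem hA l))
  intro a b
  induction a using Fin.addCases with
  | left a =>
    induction b using Fin.addCases with
    | left b =>
      rw [locIdx_left, locIdx_left]
      intro h
      rw [(A.orderEmbOfFin hA).injective h]
    | right b =>
      rw [locIdx_left, locIdx_right]
      intro h
      have := hlt a
      omega
  | right a =>
    induction b using Fin.addCases with
    | left b =>
      rw [locIdx_left, locIdx_right]
      intro h
      have := hlt b
      omega
    | right b =>
      rw [locIdx_right, locIdx_right]
      intro h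
      have : a = b := Fin.ext (by omega)
      rw [this]

theorem mem_Sset_iff (r δ k j : ℕ) (L : ℕ → Finset ℕ) (hA : (L j).card = r) (γ : ℕ) :
    γ ∈ Sset δ k L j ↔ ∃ a, locIdx r (δ - 1) k j (L j) hA a = γ := by
  rw [Sset, Finset.mem_union, Finset.mem_Ico]
  constructor
  · rintro (h | h)
    · have : γ ∈ Set.range ((L j).orderEmbOfFin hA) := by
        rw [Finset.range_orderEmbOfFin]; exact h
      obtain ⟨l, rfl⟩ := this
      exact ⟨Fin.castAdd _ l, locIdx_left ..⟩
    · refine ⟨Fin.natAdd r ⟨γ - (k + j * (δ - 1)), by omega⟩, ?_⟩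
      rw [locIdx_right]
      simp only
      omega
  · rintro ⟨a, rfl⟩
    induction a using Fin.addCases with
    | left a =>
      rw [locIdx_left]
      exact Or.inl ((L j).orderEmbOfFin_mem hA a)
    | right a =>
      rw [locIdx_right]
      have := a.isLt
      right
      omega

theorem card_filter_lt_orderEmbOfFin (r : ℕ) (A : Finset ℕ) (hA : A.card = r) (l : Fin r) :
    (A.filter (fun x => x < A.orderEmbOfFin hA l)).card = l := by
  have : A.filter (fun x => x < A.orderEmbOfFin hA l)
      = (Finset.Iio l).map (A.orderEmbOfFin hA).toEmbedding := by
    ext γ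
    simp only [Finset.mem_filter, Finset.mem_map, Finset.mem_Iio]
    constructor
    · rintro ⟨h, h'⟩
      have hm : γ ∈ Set.range (A.orderEmbOfFin hA) := by
        rw [Finset.range_orderEmbOfFin]; exact h
      obtain ⟨m, rfl⟩ := hm
      exact ⟨m, (A.orderEmbOfFin hA).lt_iff_lt.1 h', rfl⟩
    · rintro ⟨m, h, rfl⟩
      exact ⟨A.orderEmbOfFin_mem hA m, (A.orderEmbOfFin hA).lt_iff_lt.2 h⟩
  rw [this, Finset.card_map, Fin.card_Iio]

/-! ### The rows of the parity-check matrix -/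

section Code

variable {F : Type*} [Field F] (r δ ti k : ℕ) (Q : Matrix (Fin (δ - 1)) (Fin r) F)
  (L : ℕ → Finset ℕ)

theorem nVal_eq : nVal r δ ti k = k + mVal r δ ti k := by
  rw [nVal, mVal, add_mul, add_assoc]

theorem mem_codeC_iff (X : ℕ → F) :
    (fun i : Fin (nVal r δ ti k) => X i) ∈ codeC F r δ ti k Q L ↔
      ∀ ρ < mVal r δ ti k,
        ∑ γ ∈ Finset.range (nVal r δ ti k), Hval F r δ ti k Q L ρ γ * X γ = 0 := by
  rw [codeC, LinearMap.mem_ker, Matrix.mulVecLin_apply, funext_iff]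
  simp only [Matrix.mulVec, dotProduct, Hmat, Matrix.of_apply, Pi.zero_apply]
  constructor
  · intro h ρ hρ
    rw [← Fin.sum_univ_eq_sum_range (fun γ => Hval F r δ ti k Q L ρ γ * X γ)]
    exact h ⟨ρ, hρ⟩
  · intro h ρ
    rw [Fin.sum_univ_eq_sum_range (fun γ => Hval F r δ ti k Q L ρ γ * X γ)]
    exact h ρ ρ.isLt

theorem Hval_diag (hcr : cVal r k * r ≤ bVal r ti k * (δ - 1)) (ρ : ℕ) :
    Hval F r δ ti k Q L ρ (k + ρ) = 1 := by
  unfold Hval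
  by_cases h : ρ < bVal r ti k * (δ - 1)
  · rw [if_pos h, if_neg (by omega), if_pos (by omega), if_pos rfl]
  · rw [if_neg h, if_neg (by omega), if_neg (by omega), if_neg (by omega), if_pos (by omega)]

theorem Hval_of_lt (hcr : cVal r k * r ≤ bVal r ti k * (δ - 1)) (ρ γ : ℕ) (hγ : k + ρ < γ) :
    Hval F r δ ti k Q L ρ γ = 0 := by
  unfold Hval
  by_cases h : ρ < bVal r ti k * (δ - 1)
  · rw [if_pos h, if_neg (by omega), if_neg (show ¬ γ = k + ρ by omega), ite_self]
  · rw [if_neg h, if_neg (by omega), if_neg (by omega), if_neg (by omega), if_neg (by omega)]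

/-- In the first `b * d` rows the parity part of `H` is the identity. -/
theorem Hval_parity (ρ γ : ℕ) (hρ : ρ < bVal r ti k * (δ - 1)) (hk : k ≤ γ) (hγ : γ ≠ k + ρ) :
    Hval F r δ ti k Q L ρ γ = 0 := by
  unfold Hval
  rw [if_pos hρ, if_neg (by omega), if_neg hγ, ite_self]

/-- The code is systematic in its first `k` coordinates. -/
theorem exists_extension (hcr : cVal r k * r ≤ bVal r ti k * (δ - 1)) (u : ℕ → F) :
    ∃ X : ℕ → F, (∀ γ < k, X γ = u γ) ∧
      (fun i : Fin (nVal r δ ti k) => X i) ∈ codeC F r δ ti k Q L := by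
  -- Coordinate `k + ρ` is solved for from row `ρ`, in terms of the earlier coordinates.
  let step (γ : ℕ) (prev : ∀ m, m < γ → F) : F :=
    if γ < k then u γ
    else -∑ m : Fin γ, Hval F r δ ti k Q L (γ - k) m * prev m m.isLt
  let X : ℕ → F := fun γ => Nat.strongRec (motive := fun _ => F) step γ
  have hX (γ : ℕ) : X γ = step γ (fun m _ => X m) := by
    simp only [X]
    rw [Nat.strongRec_eq]
  refine ⟨X, fun γ hγ => ?_, ?_⟩
  · rw [hX]
    exact if_pos hγ
  · rw [mem_codeC_iff]
    intro ρ hρ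
    have hle : k + ρ + 1 ≤ nVal r δ ti k := by
      rw [nVal_eq]
      omega
    rw [← Finset.sum_subset (Finset.range_subset_range.2 hle)
      (fun γ _ h => by
        rw [Hval_of_lt r δ ti k Q L hcr ρ γ (by rw [Finset.mem_range] at h; omega), zero_mul]),
      Finset.sum_range_succ, Hval_diag r δ ti k Q L hcr, one_mul, hX (k + ρ)]
    simp only [step]
    rw [if_neg (by omega), Nat.add_sub_cancel_left,
      Fin.sum_univ_eq_sum_range (fun γ => Hval F r δ ti k Q L ρ γ * X γ)]
    exact add_neg_cancel _

/-- Row `ρ` of the `j`-th row block of `H` is row `ρ` of `[Q ∣ I]` on the enumeration of `S_j`. -/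
theorem row_sum_local (j : ℕ) (hj : j < bVal r ti k) (hsub : L j ⊆ Finset.range k)
    (hA : (L j).card = r) (X : ℕ → F) (ρ : Fin (δ - 1)) :
    ∑ γ ∈ Finset.range (nVal r δ ti k), Hval F r δ ti k Q L (j * (δ - 1) + ρ) γ * X γ =
      (∑ l : Fin r, Q ρ l * X (locIdx r (δ - 1) k j (L j) hA (Fin.castAdd (δ - 1) l))) +
        X (locIdx r (δ - 1) k j (L j) hA (Fin.natAdd r ρ)) := by
  have hρ := ρ.isLt
  have hrow : j * (δ - 1) + ρ < bVal r ti k * (δ - 1) := by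
    have := Nat.mul_le_mul_right (δ - 1) (Nat.succ_le_of_lt hj)
    rw [Nat.succ_mul] at this
    omega
  have hdiv : (j * (δ - 1) + ρ) / (δ - 1) = j := by
    rw [Nat.mul_comm, Nat.mul_add_div (by omega), Nat.div_eq_of_lt hρ, add_zero]
  have hmod : (j * (δ - 1) + ρ) % (δ - 1) = ρ := by
    rw [Nat.mul_comm, Nat.mul_add_mod, Nat.mod_eq_of_lt hρ]
  have hn : nVal r δ ti k = k + (bVal r ti k * (δ - 1) + cVal r k * (δ - 1)) := by
    rw [nVal, add_assoc]
  rw [hn, Finset.sum_range_add]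
  congr 1
  · rw [← Finset.sum_subset hsub]
    · have himg : L j = Finset.univ.map ((L j).orderEmbOfFin hA).toEmbedding := by
        apply Finset.coe_injective
        simp
      conv_lhs => rw [himg]
      rw [Finset.sum_map]
      refine Finset.sum_congr rfl fun l _ => ?_
      rw [locIdx_left]
      have hmem := (L j).orderEmbOfFin_mem hA l
      have hlt := Finset.mem_range.1 (hsub hmem)
      have hcard := card_filter_lt_orderEmbOfFin r (L j) hA l
      congr 1
      unfold Hval
      simp only [RelEmbedding.coe_toEmbedding, hdiv, hmod, hcard]
      rw [if_pos hrow, if_pos hlt, if_pos hmem, dif_pos ⟨hρ, l.isLt⟩]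
    · intro γ hγ hγ'
      unfold Hval
      rw [if_pos hrow, if_pos (Finset.mem_range.1 hγ), if_neg (by rwa [hdiv]), zero_mul]
  · rw [Finset.sum_eq_single (j * (δ - 1) + ρ)]
    · rw [locIdx_right, ← add_assoc]
      unfold Hval
      rw [if_pos hrow, if_neg (by omega), if_pos (by omega), if_pos (by omega), one_mul]
    · intro m _ hm
      rw [Hval_parity r δ ti k Q L _ _ hrow (by omega) (by omega), zero_mul]
    · intro h
      exact absurd (Finset.mem_range.2 (by omega)) h

/-- The restriction of a codeword to `S_j` lies in the code with parity-check matrix `[Q ∣ I]`. -/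
theorem local_parity (j : ℕ) (hj : j < bVal r ti k) (hsub : L j ⊆ Finset.range k)
    (hA : (L j).card = r) (X : ℕ → F)
    (hX : (fun i : Fin (nVal r δ ti k) => X i) ∈ codeC F r δ ti k Q L) (ρ : Fin (δ - 1)) :
    (∑ l : Fin r, Q ρ l * X (locIdx r (δ - 1) k j (L j) hA (Fin.castAdd (δ - 1) l))) +
        X (locIdx r (δ - 1) k j (L j) hA (Fin.natAdd r ρ)) = 0 := by
  rw [← row_sum_local r δ ti k Q L j hj hsub hA X ρ]
  refine (mem_codeC_iff r δ ti k Q L X).1 hX _ ?_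
  have := Nat.mul_le_mul_right (δ - 1) (Nat.succ_le_of_lt hj)
  rw [Nat.succ_mul] at this
  have hρ := ρ.isLt
  rw [mVal, add_mul]
  omega

/-! ### Size, weight and intersection of the local supports -/

theorem Sset_lt (j : ℕ) (hj : j < bVal r ti k) (hsub : L j ⊆ Finset.range k) (γ : ℕ)
    (hγ : γ ∈ Sset δ k L j) : γ < nVal r δ ti k := by
  rw [Sset, Finset.mem_union, Finset.mem_Ico] at hγ
  have := Nat.mul_le_mul_right (δ - 1) (Nat.succ_le_of_lt hj)
  rw [Nat.succ_mul] at this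
  rw [nVal]
  rcases hγ with h | h
  · have := Finset.mem_range.1 (hsub h)
    omega
  · omega

/-- The weight of a word on `S_j` can be counted along the enumeration of `S_j`. -/
theorem ncard_support (j : ℕ) (hj : j < bVal r ti k) (hsub : L j ⊆ Finset.range k)
    (hA : (L j).card = r) (X : ℕ → F) :
    {i : Fin (nVal r δ ti k) | (i : ℕ) ∈ Sset δ k L j ∧ X i ≠ 0}.ncard =
      {a : Fin (r + (δ - 1)) | X (locIdx r (δ - 1) k j (L j) hA a) ≠ 0}.ncard := by
  have hmem (a) : locIdx r (δ - 1) k j (L j) hA a ∈ Sset δ k L j :=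
    (mem_Sset_iff r δ k j L hA _).2 ⟨a, rfl⟩
  let e : Fin (r + (δ - 1)) → Fin (nVal r δ ti k) := fun a =>
    ⟨locIdx r (δ - 1) k j (L j) hA a, Sset_lt r δ ti k L j hj hsub _ (hmem a)⟩
  have he : Function.Injective e := fun a b h =>
    locIdx_injective r (δ - 1) k j (L j) hA hsub (congrArg Fin.val h)
  rw [← Set.ncard_image_of_injective _ he]
  congr 1
  ext i
  constructor
  · rintro ⟨h, h'⟩
    obtain ⟨a, ha⟩ := (mem_Sset_iff r δ k j L hA _).1 h
    refine ⟨a, ?_, Fin.ext ha⟩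
    rw [Set.mem_ofPred_eq, ha]
    exact h'
  · rintro ⟨a, ha, rfl⟩
    exact ⟨hmem a, ha⟩

end Code

theorem card_Sset (r δ k j : ℕ) (L : ℕ → Finset ℕ) (hA : (L j).card = r)
    (hsub : L j ⊆ Finset.range k) : (Sset δ k L j).card = r + (δ - 1) := by
  rw [Sset, Finset.card_union_of_disjoint, hA, Nat.card_Ico, Nat.add_sub_cancel_left]
  rw [Finset.disjoint_left]
  intro γ h h'
  have := Finset.mem_range.1 (hsub h)
  have := Finset.mem_Ico.1 h'
  omega

theorem Sset_inter (δ k j j' : ℕ) (L : ℕ → Finset ℕ) (hsub : L j ⊆ Finset.range k)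
    (hsub' : L j' ⊆ Finset.range k) (hne : j ≠ j') (hmeet : (L j ∩ L j').card ≤ 1) (p : ℕ)
    (hp : p ∈ L j) (hp' : p ∈ L j') : Sset δ k L j ∩ Sset δ k L j' = {p} := by
  ext γ
  simp only [Sset, Finset.mem_inter, Finset.mem_union, Finset.mem_Ico, Finset.mem_singleton]
  constructor
  · rintro ⟨h | h, h' | h'⟩
    · exact Finset.card_le_one.1 hmeet γ (Finset.mem_inter.2 ⟨h, h'⟩) p
        (Finset.mem_inter.2 ⟨hp, hp'⟩)
    · have := Finset.mem_range.1 (hsub h)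
      omega
    · have := Finset.mem_range.1 (hsub' h')
      omega
    · exfalso
      rcases Nat.lt_or_gt_of_ne hne with hlt | hlt
      · have := Nat.mul_le_mul_right (δ - 1) (Nat.succ_le_of_lt hlt)
        rw [Nat.succ_mul] at this
        omega
      · have := Nat.mul_le_mul_right (δ - 1) (Nat.succ_le_of_lt hlt)
        rw [Nat.succ_mul] at this
        omega
  · rintro rfl
    exact ⟨Or.inl hp, Or.inl hp'⟩

/-- Lemma 3: (a) for each `j < b`, the set `S_j = L_j ∪ B_j` has `r + δ - 1` elements and
the punctured subcode `C|_{S_j}` has minimum Hamming distance exactly `δ` (every codeword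
whose restriction to `S_j` is nonzero has at least `δ` nonzero coordinates in `S_j`, and
some codeword has exactly `δ`); and (b) for distinct lines `L j, L j'` through a common
information point `p`, the supports intersect exactly in `p`: `S_j ∩ S_j' = {p}`. -/
theorem statement6 {F : Type*} [Field F] [Fintype F]
    (r δ ti k : ℕ) (hr : 2 ≤ r) (hδ : 2 ≤ δ) (hti : 2 ≤ ti) (hk : r ∣ k)
    (Q : Matrix (Fin (δ - 1)) (Fin r) F)
    -- `Q` is the parity part of a parity-check matrix `[Q ∣ I_{δ-1}]` of an
    -- `[r+δ-1, r, δ]` MDS code: the kernel code has minimum Hamming distance exactly `δ`.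
    (hQ : (∀ x : Fin (r + (δ - 1)) → F,
        (∀ ρ : Fin (δ - 1),
          (∑ l : Fin r, Q ρ l * x (Fin.castAdd (δ - 1) l)) + x (Fin.natAdd r ρ) = 0) →
        x ≠ 0 → δ ≤ {i : Fin (r + (δ - 1)) | x i ≠ 0}.ncard) ∧
      (∃ x : Fin (r + (δ - 1)) → F,
        (∀ ρ : Fin (δ - 1),
          (∑ l : Fin r, Q ρ l * x (Fin.castAdd (δ - 1) l)) + x (Fin.natAdd r ρ) = 0) ∧
        x ≠ 0 ∧ {i : Fin (r + (δ - 1)) | x i ≠ 0}.ncard = δ))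
    (L : ℕ → Finset ℕ)
    -- `L 0, …, L (b-1)` are the lines of a `(t_i, r)`-resolvable design on `{0, …, k-1}`:
    (hLsub : ∀ j < bVal r ti k, L j ⊆ Finset.range k)
    (hLcard : ∀ j < bVal r ti k, (L j).card = r)
    (hpt : ∀ p < k, ((Finset.range (bVal r ti k)).filter (fun j => p ∈ L j)).card = ti)
    (hmeet : ∀ j < bVal r ti k, ∀ j' < bVal r ti k, j ≠ j' → (L j ∩ L j').card ≤ 1)
    (hres : ∃ cls : ℕ → ℕ, (∀ j < bVal r ti k, cls j < ti) ∧
      ∀ m < ti, ∀ p < k, ∃! j, j < bVal r ti k ∧ cls j = m ∧ p ∈ L j)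
    -- `⌈s/r⌉ · r ≤ b(δ-1)`:
    (hcr : cVal r k * r ≤ bVal r ti k * (δ - 1))
    :
    ∀ j < bVal r ti k,
      ((Sset δ k L j).card = r + (δ - 1)) ∧
      (∀ x ∈ codeC F r δ ti k Q L,
        (∃ i : Fin (nVal r δ ti k), (i : ℕ) ∈ Sset δ k L j ∧ x i ≠ 0) →
        δ ≤ {i : Fin (nVal r δ ti k) | (i : ℕ) ∈ Sset δ k L j ∧ x i ≠ 0}.ncard) ∧
      (∃ x ∈ codeC F r δ ti k Q L,
        (∃ i : Fin (nVal r δ ti k), (i : ℕ) ∈ Sset δ k L j ∧ x i ≠ 0) ∧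
        {i : Fin (nVal r δ ti k) | (i : ℕ) ∈ Sset δ k L j ∧ x i ≠ 0}.ncard = δ) ∧
      (∀ j' < bVal r ti k, j ≠ j' → ∀ p, p ∈ L j → p ∈ L j' →
        Sset δ k L j ∩ Sset δ k L j' = {p}) := by
  intro j hj
  have hsub := hLsub j hj
  have hA := hLcard j hj
  refine ⟨card_Sset r δ k j L hA hsub, ?_, ?_, fun j' hj' hne p hp hp' =>
    Sset_inter δ k j j' L hsub (hLsub j' hj') hne (hmeet j hj j' hj' hne) p hp hp'⟩
  · intro x hx hne
    obtain ⟨X, rfl⟩ : ∃ X : ℕ → F, x = fun i : Fin (nVal r δ ti k) => X i :=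
      ⟨fun γ => if h : γ < nVal r δ ti k then x ⟨γ, h⟩ else 0, by ext i; simp⟩
    rw [ncard_support r δ ti k L j hj hsub hA X]
    refine hQ.1 (fun a => X (locIdx r (δ - 1) k j (L j) hA a))
      (local_parity r δ ti k Q L j hj hsub hA X hx) ?_
    obtain ⟨i, hi, hi'⟩ := hne
    obtain ⟨a, ha⟩ := (mem_Sset_iff r δ k j L hA _).1 hi
    intro h0
    apply hi'
    have := congrFun h0 a
    simpa only [ha, Pi.zero_apply] using this
  · obtain ⟨y, hy, hy0, hyδ⟩ := hQ.2
    -- The information word carrying the first `r` symbols of `y` on `L j` and zero elsewhere.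
    let u : ℕ → F := Function.extend ((L j).orderEmbOfFin hA) (fun l => y (Fin.castAdd (δ - 1) l)) 0
    obtain ⟨X, hXu, hX⟩ := exists_extension r δ ti k Q L hcr u
    have hleft (l : Fin r) :
        X (locIdx r (δ - 1) k j (L j) hA (Fin.castAdd (δ - 1) l)) = y (Fin.castAdd (δ - 1) l) := by
      rw [locIdx_left, hXu _ (Finset.mem_range.1 (hsub ((L j).orderEmbOfFin_mem hA l)))]
      exact ((L j).orderEmbOfFin hA).injective.extend_apply _ _ l
    have hXy (a) : X (locIdx r (δ - 1) k j (L j) hA a) = y a := by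
      induction a using Fin.addCases with
      | left l => exact hleft l
      | right ρ =>
        have h := local_parity r δ ti k Q L j hj hsub hA X hX ρ
        simp only [hleft] at h
        exact add_left_cancel (h.trans (hy ρ).symm)
    refine ⟨fun i : Fin (nVal r δ ti k) => X i, hX, ?_, ?_⟩
    · obtain ⟨a, ha⟩ := Function.ne_iff.1 hy0
      have hm := (mem_Sset_iff r δ k j L hA _).2 ⟨a, rfl⟩
      refine ⟨⟨_, Sset_lt r δ ti k L j hj hsub _ hm⟩, hm, ?_⟩
      simp only [hXy]
      exact ha
    · rw [ncard_support r δ ti k L j hj hsub hA X]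
      simp only [hXy]
      exact hyδ
end

section
/- Let C ⊆ F^n be the code with parity-check matrix H produced by the construction (Algorithm 1), and assume additionally that r divides s (so that ⌈s/r⌉ = s/r = k/r²). Then C is an (r, t)-SLRC with t = t_i(δ−1), its block length satisfies n = k + s·t_i·(δ−1) + (s/r)(δ−1) = k·(1 + t/r + (δ−1)/r²), and hence its rate satisfies k/n = (1 + t/r + (δ−1)/r²)^{−1}. -/
/-! ### Sequential repair -/

/-- A code in which every nonempty set of at most `t` erasures contains a coordinate that is
repairable from unerased ones is a sequential LRC: repair that coordinate first and iterate. -/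
lemma slrc_of_step {F : Type*} [Field F] {n : ℕ} (C : Set (Fin n → F)) (r t : ℕ)
    (h : ∀ I : Finset (Fin n), I.Nonempty → I.card ≤ t →
      ∃ i ∈ I, ∃ R : Finset (Fin n), RecSet C r i R ∧ ∀ x ∈ R, x ∉ I) :
    IsSLRC C r t := by
  intro I
  induction I using Finset.strongInduction with
  | H I ih =>
    intro hI
    rcases I.eq_empty_or_nonempty with rfl | hne
    · exact ⟨[], by simp, by simp, fun j => j.elim0⟩
    · obtain ⟨i, hi, R, hR, hRI⟩ := h I hne hI
      obtain ⟨l, hnd, hl, hrec⟩ := ih (I.erase i) (Finset.erase_ssubset hi)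
        ((Finset.card_le_card (Finset.erase_subset i I)).trans hI)
      have hil : i ∉ l := by
        intro hmem
        have : i ∈ l.toFinset := by simpa using hmem
        rw [hl] at this
        simp at this
      refine ⟨i :: l, List.nodup_cons.2 ⟨hil, hnd⟩, ?_, ?_⟩
      · rw [List.toFinset_cons, hl, Finset.insert_erase hi]
      · rintro ⟨j, hj⟩
        cases j with
        | zero => exact ⟨R, hR, fun x hx => Or.inl (hRI x hx)⟩
        | succ j =>
          obtain ⟨R', hR', h'⟩ := hrec ⟨j, by simpa using hj⟩
          refine ⟨R', by simpa using hR', fun x hx => ?_⟩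
          rcases h' x hx with h1 | h1
          · by_cases hxi : x = i
            · right; simp [hxi]
            · left; intro hxI; exact h1 (Finset.mem_erase.2 ⟨hxi, hxI⟩)
          · right; simp only [List.take_succ_cons, List.mem_cons]; exact Or.inr h1

/-! ### The local MDS code -/

/-- Membership in the local MDS code with parity-check matrix `[Q ∣ I_d]`. -/
def LocalEq {F : Type*} [Field F] {r d : ℕ} (Q : Matrix (Fin d) (Fin r) F)
    (x : Fin (r + d) → F) : Prop :=
  ∀ ρ : Fin d, (∑ l : Fin r, Q ρ l * x (Fin.castAdd d l)) + x (Fin.natAdd r ρ) = 0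

/-- The kernel of `[Q ∣ I_d]` as a subspace. -/
def localCode {F : Type*} [Field F] {r d : ℕ} (Q : Matrix (Fin d) (Fin r) F) :
    Submodule F (Fin (r + d) → F) where
  carrier := {x | LocalEq Q x}
  add_mem' := by
    intro x y hx hy ρ
    have h1 := hx ρ
    have h2 := hy ρ
    simp only [Pi.add_apply, mul_add, Finset.sum_add_distrib]
    linear_combination h1 + h2
  zero_mem' := by intro ρ; simp
  smul_mem' := by
    intro c x hx ρ
    have h1 := hx ρ
    simp only [Pi.smul_apply, smul_eq_mul, mul_left_comm _ c, ← Finset.mul_sum]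
    linear_combination c * h1

/-- Any `r` coordinates of the local code determine every coordinate linearly: restriction to
them is injective, as a codeword vanishing there has weight at most `d`. -/
lemma mds_info {F : Type*} [Field F] {r d : ℕ} (Q : Matrix (Fin d) (Fin r) F)
    (hQ : ∀ x : Fin (r + d) → F, LocalEq Q x → x ≠ 0 →
      d + 1 ≤ {i : Fin (r + d) | x i ≠ 0}.ncard)
    (T : Finset (Fin (r + d))) (hT : T.card = r) (i : Fin (r + d)) :
    ∃ a : Fin (r + d) → F, ∀ y, LocalEq Q y → y i = ∑ j ∈ T, a j * y j := by
  classical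
  let f : localCode Q →ₗ[F] (T → F) :=
    (LinearMap.funLeft F F (Subtype.val : T → Fin (r + d))).comp (localCode Q).subtype
  have hf : LinearMap.ker f = ⊥ := by
    rw [LinearMap.ker_eq_bot']
    rintro ⟨y, hy⟩ h0
    by_contra hne
    have hy0 : y ≠ 0 := fun h => hne (Subtype.ext h)
    have hw := hQ y hy hy0
    have hz : ∀ j ∈ T, y j = 0 := fun j hj => congrFun h0 ⟨j, hj⟩
    have hsub : {i : Fin (r + d) | y i ≠ 0} ⊆ ((Tᶜ : Finset (Fin (r + d))) : Set _) := by
      intro j hj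
      simp only [Finset.coe_compl, Set.mem_compl_iff, Finset.mem_coe]
      exact fun hjT => hj (hz j hjT)
    have h1 := Set.ncard_le_ncard hsub (Finset.finite_toSet _)
    rw [Set.ncard_coe_finset, Finset.card_compl, Fintype.card_fin] at h1
    omega
  obtain ⟨g, hg⟩ := f.exists_leftInverse_of_injective hf
  refine ⟨fun j => if hj : j ∈ T then (g (Pi.single ⟨j, hj⟩ 1)).1 i else 0, fun y hy => ?_⟩
  have h1 : g (f ⟨y, hy⟩) = ⟨y, hy⟩ := LinearMap.congr_fun hg _
  have h2 : f ⟨y, hy⟩ = ∑ j : T, y j • (Pi.single j 1 : T → F) := by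
    ext t
    simp [Finset.sum_apply, Pi.single_apply, f, LinearMap.funLeft]
  rw [h2, map_sum] at h1
  have h3 := congrFun (congrArg Subtype.val h1) i
  simp only [map_smul, Submodule.coe_sum, Submodule.coe_smul, Finset.sum_apply, Pi.smul_apply,
    smul_eq_mul] at h3
  rw [← h3, ← Finset.sum_coe_sort T]
  refine Finset.sum_congr rfl fun j _ => ?_
  simp [mul_comm]

/-- If a code restricts, along an injection `e` of coordinates, to the local MDS code, then an
erased coordinate of the block `range e` is repairable once the block has at most `d` erasures. -/
lemma recover_of_block {F : Type*} [Field F] {r d n : ℕ} (Q : Matrix (Fin d) (Fin r) F)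
    (hQ : ∀ x : Fin (r + d) → F, LocalEq Q x → x ≠ 0 →
      d + 1 ≤ {i : Fin (r + d) | x i ≠ 0}.ncard)
    (C : Set (Fin n → F)) (e : Fin (r + d) → Fin n) (he : Function.Injective e)
    (hC : ∀ x ∈ C, LocalEq Q (x ∘ e)) (I : Finset (Fin n)) (i : Fin (r + d)) (hi : e i ∈ I)
    (hcard : (Finset.univ.filter (fun j => e j ∈ I)).card ≤ d) :
    ∃ R : Finset (Fin n), RecSet C r (e i) R ∧ ∀ x ∈ R, x ∉ I := by
  classical
  have h1 : r ≤ (Finset.univ.filter (fun j => ¬ e j ∈ I)).card := by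
    have := Finset.card_filter_add_card_filter_not (s := Finset.univ) (fun j => e j ∈ I)
    simp only [Finset.card_univ, Fintype.card_fin] at this
    omega
  obtain ⟨T, hTs, hT⟩ := Finset.exists_subset_card_eq h1
  have hTI : ∀ j ∈ T, e j ∉ I := fun j hj => (Finset.mem_filter.1 (hTs hj)).2
  obtain ⟨a, ha⟩ := mds_info Q hQ T hT i
  have hRI : ∀ x ∈ T.image e, x ∉ I := by
    intro x hx
    obtain ⟨j, hj, rfl⟩ := Finset.mem_image.1 hx
    exact hTI j hj
  refine ⟨T.image e, ⟨fun h => hRI _ h hi, ?_, ?_⟩, hRI⟩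
  · rw [Finset.card_image_of_injective _ he, hT]
  · refine ⟨Function.extend e a 0, fun x hx => ?_⟩
    rw [Finset.sum_image he.injOn]
    simp only [he.extend_apply]
    exact ha _ (hC x hx)

/-! ### Row blocks of `H` -/

/-- The coordinates of a block with parity-check matrix `[Q ∣ I]`: `v` lists the columns carrying
`Q`, and the identity columns start at `w`. -/
def blockIdx {r d n : ℕ} (v : Fin r → ℕ) (w : ℕ) (hv : ∀ l, v l < n) (hw : w + d ≤ n) :
    Fin (r + d) → Fin n :=
  Fin.addCases (fun l => ⟨v l, hv l⟩) (fun ρ => ⟨w + ρ, by omega⟩)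

lemma blockIdx_inj {r d n : ℕ} (v : Fin r → ℕ) (w : ℕ) (hv : ∀ l, v l < n) (hw : w + d ≤ n)
    (hinj : Function.Injective v) (hvw : ∀ l, v l < w) :
    Function.Injective (blockIdx v w hv hw) := by
  intro a b
  refine Fin.addCases (fun l => ?_) (fun ρ => ?_) a <;>
  refine Fin.addCases (fun l' => ?_) (fun ρ' => ?_) b <;>
  simp only [blockIdx, Fin.addCases_left, Fin.addCases_right, Fin.mk.injEq] <;> intro h
  · rw [hinj h]
  · have := hvw l; omega
  · have := hvw l'; omega
  · congr 1; ext; omega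

/-- Rows of a parity-check matrix whose nonzero entries form `[Q ∣ I]` on the columns `e` put
`x ∘ e` into the local code. -/
lemma localEq_of_rows {F : Type*} [Field F] {r d n m : ℕ} (Q : Matrix (Fin d) (Fin r) F)
    (H : Matrix (Fin m) (Fin n) F) (x : Fin n → F) (hx : H.mulVec x = 0)
    (e : Fin (r + d) → Fin n) (he : Function.Injective e) (row : Fin d → Fin m)
    (hz : ∀ ρ γ, γ ∉ Set.range e → H (row ρ) γ = 0)
    (hq : ∀ ρ l, H (row ρ) (e (Fin.castAdd d l)) = Q ρ l)
    (hid : ∀ ρ ρ', H (row ρ) (e (Fin.natAdd r ρ')) = if ρ' = ρ then 1 else 0) :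
    LocalEq Q (x ∘ e) := by
  intro ρ
  have h := congrFun hx (row ρ)
  simp only [Matrix.mulVec, dotProduct, Pi.zero_apply] at h
  rw [← Fintype.sum_of_injective e he (fun i => H (row ρ) (e i) * x (e i)) _
    (fun γ hγ => by rw [hz ρ γ hγ, zero_mul]) (fun _ => rfl), Fin.sum_univ_add] at h
  simpa [hq, hid] using h

lemma card_filter_lt_orderEmb (s : Finset ℕ) {r : ℕ} (h : s.card = r) (l : Fin r) :
    (s.filter (fun x => x < s.orderEmbOfFin h l)).card = l := by
  have : s.filter (fun x => x < s.orderEmbOfFin h l)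
      = (Finset.Iio l).map (s.orderEmbOfFin h).toEmbedding := by
    ext x
    simp only [Finset.mem_filter, Finset.mem_map, Finset.mem_Iio, RelEmbedding.coe_toEmbedding]
    constructor
    · rintro ⟨hx, hlt⟩
      have : x ∈ Set.range (s.orderEmbOfFin h) := by simpa using hx
      obtain ⟨l', rfl⟩ := this
      exact ⟨l', (s.orderEmbOfFin h).lt_iff_lt.1 hlt, rfl⟩
    · rintro ⟨l', hl', rfl⟩
      exact ⟨by simp, (s.orderEmbOfFin h).lt_iff_lt.2 hl'⟩
  rw [this]; simp

lemma block_le {j b d : ℕ} (hj : j < b) : j * d + d ≤ b * d := by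
  have := Nat.mul_le_mul_right d (Nat.succ_le_of_lt hj)
  rw [Nat.succ_mul] at this; exact this

/-- The rows of line block `j` put the restriction of each codeword to the `r` points of `L j`
and the `δ - 1` parities of the block into the local MDS code. -/
lemma local_line {F : Type*} [Field F] (r δ ti k : ℕ)
    (Q : Matrix (Fin (δ - 1)) (Fin r) F) (L : ℕ → Finset ℕ)
    (j : ℕ) (hj : j < bVal r ti k) (hsub : L j ⊆ Finset.range k) (hcard : (L j).card = r)
    (hv : ∀ l, (L j).orderEmbOfFin hcard l < nVal r δ ti k)
    (hw : k + j * (δ - 1) + (δ - 1) ≤ nVal r δ ti k)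
    (x : Fin (nVal r δ ti k) → F) (hx : x ∈ codeC F r δ ti k Q L) :
    LocalEq Q (x ∘ blockIdx (fun l => (L j).orderEmbOfFin hcard l) (k + j * (δ - 1)) hv hw) := by
  have hb := block_le (d := δ - 1) hj
  have hlt : ∀ l, (L j).orderEmbOfFin hcard l < k := fun l =>
    Finset.mem_range.1 (hsub (Finset.orderEmbOfFin_mem _ _ _))
  have hdiv : ∀ ρ : Fin (δ - 1), (j * (δ - 1) + ρ) / (δ - 1) = j := fun ρ => by
    have := ρ.2
    rw [mul_comm, Nat.mul_add_div (by omega), Nat.div_eq_of_lt this, add_zero]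
  have hmod : ∀ ρ : Fin (δ - 1), (j * (δ - 1) + ρ) % (δ - 1) = ρ := fun ρ => by
    rw [mul_comm, Nat.mul_add_mod, Nat.mod_eq_of_lt ρ.2]
  refine localEq_of_rows Q (Hmat F r δ ti k Q L) x hx _
    (blockIdx_inj _ _ _ _ ((L j).orderEmbOfFin hcard).injective (fun l => ?_))
    (fun ρ => ⟨j * (δ - 1) + ρ, ?_⟩) ?_ ?_ ?_
  · have := hlt l; omega
  · have := ρ.2; rw [mVal, add_mul]; omega
  · intro ρ γ hγ
    have hρ : j * (δ - 1) + ρ < bVal r ti k * (δ - 1) := by have := ρ.2; omega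
    simp only [Hmat, Matrix.of_apply, Hval, if_pos hρ, hdiv]
    split_ifs with h1 h2 h3 h4 h5
    · exfalso
      have : (γ : ℕ) ∈ Set.range ((L j).orderEmbOfFin hcard) := by simpa using h2
      obtain ⟨l, hl⟩ := this
      exact hγ ⟨Fin.castAdd _ l, by ext; simpa [blockIdx] using hl⟩
    · rfl
    · rfl
    · exfalso
      exact hγ ⟨Fin.natAdd _ ρ, by ext; simp only [blockIdx, Fin.addCases_right]; omega⟩
    · rfl
    · rfl
  · intro ρ l
    have hρ : j * (δ - 1) + ρ < bVal r ti k * (δ - 1) := by have := ρ.2; omega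
    have hm : (L j).orderEmbOfFin hcard l ∈ L j := Finset.orderEmbOfFin_mem _ _ _
    simp only [Hmat, Matrix.of_apply, Hval, if_pos hρ, hdiv, hmod, blockIdx, Fin.addCases_left,
      if_pos (hlt l), if_pos hm, card_filter_lt_orderEmb]
    rw [dif_pos ⟨ρ.2, l.2⟩]
  · intro ρ ρ'
    have hρ : j * (δ - 1) + ρ < bVal r ti k * (δ - 1) := by have := ρ.2; omega
    have h1 : ¬ (k + j * (δ - 1) + (ρ' : ℕ) < k) := by omega
    have h2 : k + j * (δ - 1) + (ρ' : ℕ) < k + bVal r ti k * (δ - 1) := by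
      have := ρ'.2; omega
    simp only [Hmat, Matrix.of_apply, Hval, if_pos hρ, blockIdx, Fin.addCases_right,
      if_neg h1, if_pos h2]
    congr 1
    rw [Fin.ext_iff, eq_iff_iff]; omega

/-- The analogue of `local_line` for the last `⌈s/r⌉` row blocks. -/
lemma local_tail {F : Type*} [Field F] (r δ ti k : ℕ)
    (Q : Matrix (Fin (δ - 1)) (Fin r) F) (L : ℕ → Finset ℕ)
    (hcr : cVal r k * r ≤ bVal r ti k * (δ - 1))
    (j : ℕ) (hj : j < cVal r k)
    (hv : ∀ l : Fin r, k + j * r + l < nVal r δ ti k)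
    (hw : k + bVal r ti k * (δ - 1) + j * (δ - 1) + (δ - 1) ≤ nVal r δ ti k)
    (x : Fin (nVal r δ ti k) → F) (hx : x ∈ codeC F r δ ti k Q L) :
    LocalEq Q (x ∘ blockIdx (fun l : Fin r => k + j * r + l)
      (k + bVal r ti k * (δ - 1) + j * (δ - 1)) hv hw) := by
  have hb := block_le (d := δ - 1) hj
  have hb' := block_le (d := r) hj
  have hsub : ∀ ρ : Fin (δ - 1), bVal r ti k * (δ - 1) + j * (δ - 1) + ρ
      - bVal r ti k * (δ - 1) = j * (δ - 1) + ρ := fun ρ => by omega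
  have hdiv : ∀ (d : ℕ) (ρ : Fin d), (j * d + ρ) / d = j := fun d ρ => by
    have := ρ.2
    rw [mul_comm, Nat.mul_add_div (by omega), Nat.div_eq_of_lt this, add_zero]
  have hmod : ∀ (d : ℕ) (ρ : Fin d), (j * d + ρ) % d = ρ := fun d ρ => by
    rw [mul_comm, Nat.mul_add_mod, Nat.mod_eq_of_lt ρ.2]
  have hρ : ∀ ρ : Fin (δ - 1), ¬ (bVal r ti k * (δ - 1) + j * (δ - 1) + ρ
      < bVal r ti k * (δ - 1)) := fun ρ => by omega
  refine localEq_of_rows Q (Hmat F r δ ti k Q L) x hx _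
    (blockIdx_inj _ _ _ _ (fun l l' h => ?_) (fun l => ?_))
    (fun ρ => ⟨bVal r ti k * (δ - 1) + j * (δ - 1) + ρ, ?_⟩) ?_ ?_ ?_
  · ext; omega
  · have := l.2; omega
  · have := ρ.2; rw [mVal, add_mul]; omega
  · intro ρ γ hγ
    simp only [Hmat, Matrix.of_apply, Hval, if_neg (hρ ρ), hsub, hdiv]
    split_ifs with h1 h2 h3 h4 h5 h6
    · rfl
    · exfalso
      refine hγ ⟨Fin.castAdd _ ⟨((γ : ℕ) - k) % r, h4.2⟩, ?_⟩
      ext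
      simp only [blockIdx, Fin.addCases_left]
      have := Nat.div_add_mod ((γ : ℕ) - k) r
      rw [h3, mul_comm] at this
      omega
    · rfl
    · rfl
    · rfl
    · exfalso
      exact hγ ⟨Fin.natAdd _ ρ, by ext; simp only [blockIdx, Fin.addCases_right]; omega⟩
    · rfl
  · intro ρ l
    have h1 : ¬ (k + j * r + (l : ℕ) < k) := by omega
    have h2 : k + j * r + (l : ℕ) < k + cVal r k * r := by have := l.2; omega
    have h3 : k + j * r + (l : ℕ) - k = j * r + l := by omega
    simp only [Hmat, Matrix.of_apply, Hval, if_neg (hρ ρ), hsub, hdiv, hmod, blockIdx,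
      Fin.addCases_left, if_neg h1, if_pos h2, h3, if_true]
    rw [dif_pos ⟨ρ.2, l.2⟩]
  · intro ρ ρ'
    have h1 : ¬ (k + bVal r ti k * (δ - 1) + j * (δ - 1) + (ρ' : ℕ) < k) := by omega
    have h2 : ¬ (k + bVal r ti k * (δ - 1) + j * (δ - 1) + (ρ' : ℕ) < k + cVal r k * r) := by
      omega
    have h3 : ¬ (k + bVal r ti k * (δ - 1) + j * (δ - 1) + (ρ' : ℕ)
        < k + bVal r ti k * (δ - 1)) := by omega
    simp only [Hmat, Matrix.of_apply, Hval, if_neg (hρ ρ), hsub, blockIdx, Fin.addCases_right,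
      if_neg h1, if_neg h2, if_neg h3]
    congr 1
    rw [Fin.ext_iff, eq_iff_iff]; omega

/-! ### Finding a repairable erasure -/

/-- Counting step: among the `ti` line blocks through `p`, which pairwise share only `p`, one
contains at most `d` elements of `J` if `|J| ≤ ti * d` and `p ∈ J`. -/
lemma exists_good_line (b d ti k : ℕ) (L : ℕ → Finset ℕ)
    (hLsub : ∀ j < b, L j ⊆ Finset.range k)
    (hmeet : ∀ j < b, ∀ j' < b, j ≠ j' → (L j ∩ L j').card ≤ 1)
    (p : ℕ) (hpt : ((Finset.range b).filter (fun j => p ∈ L j)).card = ti)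
    (J : Finset ℕ) (hpJ : p ∈ J) (hJ : J.card ≤ ti * d) :
    ∃ j < b, p ∈ L j ∧
      ((L j ∪ Finset.Ico (k + j * d) (k + j * d + d)) ∩ J).card ≤ d := by
  classical
  by_contra! hcon
  let B : ℕ → Finset ℕ := fun j =>
    ((L j ∪ Finset.Ico (k + j * d) (k + j * d + d)) ∩ J).erase p
  let S := (Finset.range b).filter (fun j => p ∈ L j)
  have hS : ∀ j, j ∈ S ↔ j < b ∧ p ∈ L j := fun j => by simp [S]
  have hBcard : ∀ j ∈ S, d ≤ (B j).card := by
    intro j hj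
    obtain ⟨hjb, hpj⟩ := (hS j).1 hj
    have := hcon j hjb hpj
    rw [Finset.card_erase_of_mem (by simp [hpj, hpJ])]
    omega
  have hdisj : (S : Set ℕ).PairwiseDisjoint B := by
    intro j hj j' hj' hne
    obtain ⟨hjb, hpj⟩ := (hS j).1 hj
    obtain ⟨hjb', hpj'⟩ := (hS j').1 hj'
    refine Finset.disjoint_left.2 fun y hy hy' => ?_
    simp only [B, Finset.mem_erase, Finset.mem_inter, Finset.mem_union, Finset.mem_Ico] at hy hy'
    obtain ⟨hyp, hy1, -⟩ := hy
    obtain ⟨-, hy2, -⟩ := hy'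
    rcases hy1 with hy1 | hy1 <;> rcases hy2 with hy2 | hy2
    · exact hyp (Finset.card_le_one.1 (hmeet j hjb j' hjb' hne) y
        (Finset.mem_inter.2 ⟨hy1, hy2⟩) p (Finset.mem_inter.2 ⟨hpj, hpj'⟩))
    · have := Finset.mem_range.1 (hLsub j hjb hy1); omega
    · have := Finset.mem_range.1 (hLsub j' hjb' hy2); omega
    · rcases Nat.lt_or_gt_of_ne hne with h | h
      · have := block_le (d := d) h; omega
      · have := block_le (d := d) h; omega
  have h1 : S.card * d ≤ (S.biUnion B).card := by
    rw [Finset.card_biUnion hdisj, ← smul_eq_mul]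
    exact Finset.card_nsmul_le_sum _ _ _ hBcard
  have h2 : (S.biUnion B).card ≤ (J.erase p).card := by
    refine Finset.card_le_card (Finset.biUnion_subset.2 fun j _ => ?_)
    exact Finset.erase_subset_erase _ Finset.inter_subset_right
  rw [Finset.card_erase_of_mem hpJ] at h2
  have h3 : 0 < J.card := Finset.card_pos.2 ⟨p, hpJ⟩
  have h4 : S.card = ti := hpt
  rw [h4] at h1
  omega

/-- A block with no erasure among its `r` columns carrying `Q` has at most `d` erasures. -/
lemma card_block_le {r d n : ℕ} (e : Fin (r + d) → Fin n) (I : Finset (Fin n))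
    (h : ∀ l, e (Fin.castAdd d l) ∉ I) :
    (Finset.univ.filter (fun j => e j ∈ I)).card ≤ d := by
  have hs : Finset.univ.filter (fun j => e j ∈ I)
      ⊆ (Finset.univ : Finset (Fin d)).image (Fin.natAdd r) := by
    intro a ha
    have ha' := (Finset.mem_filter.1 ha).2
    clear ha
    revert ha'
    refine Fin.addCases (fun l hl => (h l hl).elim) (fun ρ _ => ?_) a
    exact Finset.mem_image_of_mem _ (Finset.mem_univ _)
  exact (Finset.card_le_card hs).trans (Finset.card_image_le.trans (by simp))

lemma slrc_main {F : Type*} [Field F]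
    (r δ ti k : ℕ) (hδ : 2 ≤ δ)
    (Q : Matrix (Fin (δ - 1)) (Fin r) F)
    (hQ : ∀ x : Fin (r + (δ - 1)) → F, LocalEq Q x → x ≠ 0 →
      (δ - 1) + 1 ≤ {i : Fin (r + (δ - 1)) | x i ≠ 0}.ncard)
    (L : ℕ → Finset ℕ)
    (hLsub : ∀ j < bVal r ti k, L j ⊆ Finset.range k)
    (hLcard : ∀ j < bVal r ti k, (L j).card = r)
    (hpt : ∀ p < k, ((Finset.range (bVal r ti k)).filter (fun j => p ∈ L j)).card = ti)
    (hmeet : ∀ j < bVal r ti k, ∀ j' < bVal r ti k, j ≠ j' → (L j ∩ L j').card ≤ 1)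
    (hcr : cVal r k * r ≤ bVal r ti k * (δ - 1)) :
    IsSLRC (codeC F r δ ti k Q L : Set (Fin (nVal r δ ti k) → F)) r (ti * (δ - 1)) := by
  classical
  have hd : 0 < δ - 1 := by omega
  have hn : nVal r δ ti k = k + bVal r ti k * (δ - 1) + cVal r k * (δ - 1) := rfl
  have hvL : ∀ j (hj : j < bVal r ti k) l, (L j).orderEmbOfFin (hLcard j hj) l < k :=
    fun j hj l => Finset.mem_range.1 (hLsub j hj (Finset.orderEmbOfFin_mem _ _ _))
  have hvn : ∀ j (hj : j < bVal r ti k) l,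
      (L j).orderEmbOfFin (hLcard j hj) l < nVal r δ ti k :=
    fun j hj l => by have := hvL j hj l; omega
  have hwn : ∀ j, j < bVal r ti k → k + j * (δ - 1) + (δ - 1) ≤ nVal r δ ti k :=
    fun j hj => by have := block_le (d := δ - 1) hj; omega
  refine slrc_of_step _ _ _ fun I hne hI => ?_
  by_cases hA : ∃ i ∈ I, (i : ℕ) < k
  · obtain ⟨i, hi, hik⟩ := hA
    obtain ⟨j, hj, hij, hgood⟩ := exists_good_line (bVal r ti k) (δ - 1) ti k L hLsub hmeet i
      (hpt i hik) (I.image Fin.val) (Finset.mem_image_of_mem _ hi)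
      (Finset.card_image_le.trans hI)
    set e := blockIdx (fun l => (L j).orderEmbOfFin (hLcard j hj) l) (k + j * (δ - 1))
      (hvn j hj) (hwn j hj) with he
    have hinj : Function.Injective e := blockIdx_inj _ _ _ _
      ((L j).orderEmbOfFin (hLcard j hj)).injective
      (fun l => by have := hvL j hj l; omega)
    have : (i : ℕ) ∈ Set.range ((L j).orderEmbOfFin (hLcard j hj)) := by simpa using hij
    obtain ⟨l, hl⟩ := this
    have hel : e (Fin.castAdd _ l) = i := by ext; simpa [he, blockIdx] using hl
    refine ⟨i, hi, ?_⟩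
    rw [← hel]
    refine recover_of_block Q hQ _ e hinj
      (fun x hx => local_line r δ ti k Q L j hj (hLsub j hj) (hLcard j hj) _ _ x hx) I _
      (by rw [hel]; exact hi) (le_trans ?_ hgood)
    refine Finset.card_le_card_of_injOn (fun a => (e a : ℕ)) ?_
      (fun a _ b _ h => hinj (Fin.ext h))
    intro a ha
    have haI : e a ∈ I := (Finset.mem_filter.1 (Finset.mem_coe.1 ha)).2
    refine Finset.mem_coe.2 (Finset.mem_inter.2 ⟨?_, Finset.mem_image_of_mem _ haI⟩)
    clear ha haI
    refine Fin.addCases (fun l => ?_) (fun ρ => ?_) a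
    · refine Finset.mem_union_left _ ?_
      simp only [he, blockIdx, Fin.addCases_left]
      exact Finset.orderEmbOfFin_mem _ _ _
    · refine Finset.mem_union_right _ ?_
      simp only [he, blockIdx, Fin.addCases_right, Finset.mem_Ico]
      have := ρ.2; omega
  push Not at hA
  by_cases hB : ∃ i ∈ I, (i : ℕ) < k + bVal r ti k * (δ - 1)
  · obtain ⟨i, hi, hib⟩ := hB
    have hki := hA i hi
    have hdm := Nat.div_add_mod ((i : ℕ) - k) (δ - 1)
    have hml := Nat.mod_lt ((i : ℕ) - k) hd
    set j := ((i : ℕ) - k) / (δ - 1) with hjdef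
    have hj : j < bVal r ti k := by
      rw [hjdef, Nat.div_lt_iff_lt_mul hd]; omega
    rw [mul_comm] at hdm
    set e := blockIdx (fun l => (L j).orderEmbOfFin (hLcard j hj) l) (k + j * (δ - 1))
      (hvn j hj) (hwn j hj) with he
    have hinj : Function.Injective e := blockIdx_inj _ _ _ _
      ((L j).orderEmbOfFin (hLcard j hj)).injective
      (fun l => by have := hvL j hj l; omega)
    have hel : e (Fin.natAdd r ⟨((i : ℕ) - k) % (δ - 1), hml⟩) = i := by
      ext; simp only [he, blockIdx, Fin.addCases_right]; omega
    refine ⟨i, hi, ?_⟩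
    rw [← hel]
    refine recover_of_block Q hQ _ e hinj
      (fun x hx => local_line r δ ti k Q L j hj (hLsub j hj) (hLcard j hj) _ _ x hx) I _
      (by rw [hel]; exact hi) (card_block_le e I fun l hl => ?_)
    have h1 := hA _ hl
    have h2 := hvL j hj l
    simp only [he, blockIdx, Fin.addCases_left] at h1
    omega
  · push Not at hB
    obtain ⟨i, hi⟩ := hne
    have hki := hB i hi
    have hin := i.2
    have hdm := Nat.div_add_mod ((i : ℕ) - (k + bVal r ti k * (δ - 1))) (δ - 1)
    have hml := Nat.mod_lt ((i : ℕ) - (k + bVal r ti k * (δ - 1))) hd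
    set j := ((i : ℕ) - (k + bVal r ti k * (δ - 1))) / (δ - 1) with hjdef
    have hj : j < cVal r k := by
      rw [hjdef, Nat.div_lt_iff_lt_mul hd]; omega
    rw [mul_comm] at hdm
    have hb := block_le (d := δ - 1) hj
    have hb' := block_le (d := r) hj
    have hv : ∀ l : Fin r, k + j * r + l < k + bVal r ti k * (δ - 1) := fun l => by
      have := l.2; omega
    set e := blockIdx (n := nVal r δ ti k) (d := δ - 1) (fun l : Fin r => k + j * r + l)
      (k + bVal r ti k * (δ - 1) + j * (δ - 1))
      (fun l => by have := hv l; omega) (by omega) with he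
    have hinj : Function.Injective e := blockIdx_inj _ _ _ _
      (fun l l' h => by ext; omega)
      (fun l => by have := hv l; omega)
    have hel : e (Fin.natAdd r ⟨_, hml⟩) = i := by
      ext; simp only [he, blockIdx, Fin.addCases_right]; omega
    refine ⟨i, hi, ?_⟩
    rw [← hel]
    refine recover_of_block Q hQ _ e hinj
      (fun x hx => local_tail r δ ti k Q L hcr j hj _ _ x hx) I _
      (by rw [hel]; exact hi) (card_block_le e I fun l hl => ?_)
    have h1 := hB _ hl
    have h2 := hv l
    simp only [he, blockIdx, Fin.addCases_left] at h1
    omega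

/-! ### Block length and rate -/

/-- Theorem 1: if moreover `r ∣ s` (so `⌈s/r⌉ = s/r = k/r²`), the code of Algorithm 1 is
an `(r, t)`-SLRC with `t = t_i(δ-1)`, its block length is
`n = k + s·t_i·(δ-1) + (s/r)(δ-1) = k(1 + t/r + (δ-1)/r²)`, and its rate is
`k/n = (1 + t/r + (δ-1)/r²)⁻¹`. -/
theorem statement8 {F : Type*} [Field F] [Fintype F]
    (r δ ti k : ℕ) (hr : 2 ≤ r) (hδ : 2 ≤ δ) (hti : 2 ≤ ti) (hk : r ∣ k)
    (Q : Matrix (Fin (δ - 1)) (Fin r) F)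
    -- `Q` is the parity part of a parity-check matrix `[Q ∣ I_{δ-1}]` of an
    -- `[r+δ-1, r, δ]` MDS code: the kernel code has minimum Hamming distance exactly `δ`.
    (hQ : (∀ x : Fin (r + (δ - 1)) → F,
        (∀ ρ : Fin (δ - 1),
          (∑ l : Fin r, Q ρ l * x (Fin.castAdd (δ - 1) l)) + x (Fin.natAdd r ρ) = 0) →
        x ≠ 0 → δ ≤ {i : Fin (r + (δ - 1)) | x i ≠ 0}.ncard) ∧
      (∃ x : Fin (r + (δ - 1)) → F,
        (∀ ρ : Fin (δ - 1),
          (∑ l : Fin r, Q ρ l * x (Fin.castAdd (δ - 1) l)) + x (Fin.natAdd r ρ) = 0) ∧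
        x ≠ 0 ∧ {i : Fin (r + (δ - 1)) | x i ≠ 0}.ncard = δ))
    (L : ℕ → Finset ℕ)
    -- `L 0, …, L (b-1)` are the lines of a `(t_i, r)`-resolvable design on `{0, …, k-1}`:
    (hLsub : ∀ j < bVal r ti k, L j ⊆ Finset.range k)
    (hLcard : ∀ j < bVal r ti k, (L j).card = r)
    (hpt : ∀ p < k, ((Finset.range (bVal r ti k)).filter (fun j => p ∈ L j)).card = ti)
    (hmeet : ∀ j < bVal r ti k, ∀ j' < bVal r ti k, j ≠ j' → (L j ∩ L j').card ≤ 1)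
    (hres : ∃ cls : ℕ → ℕ, (∀ j < bVal r ti k, cls j < ti) ∧
      ∀ m < ti, ∀ p < k, ∃! j, j < bVal r ti k ∧ cls j = m ∧ p ∈ L j)
    -- `⌈s/r⌉ · r ≤ b(δ-1)`:
    (hcr : cVal r k * r ≤ bVal r ti k * (δ - 1))
    (hk0 : 0 < k) (hrs : r ∣ (k / r))
    :
    IsSLRC (codeC F r δ ti k Q L : Set (Fin (nVal r δ ti k) → F)) r (ti * (δ - 1)) ∧
    nVal r δ ti k = k + (k / r) * ti * (δ - 1) + (k / r / r) * (δ - 1) ∧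
    (nVal r δ ti k : ℚ) =
      (k : ℚ) * (1 + ((ti * (δ - 1) : ℕ) : ℚ) / (r : ℚ) + (((δ - 1 : ℕ)) : ℚ) / (r : ℚ) ^ 2) ∧
    (k : ℚ) / (nVal r δ ti k : ℚ) =
      (1 + ((ti * (δ - 1) : ℕ) : ℚ) / (r : ℚ) + (((δ - 1 : ℕ)) : ℚ) / (r : ℚ) ^ 2)⁻¹ := by
  have hc : cVal r k = k / r / r := by
    obtain ⟨c, hc⟩ := hrs
    rw [cVal, hc, Nat.mul_div_cancel_left _ (by omega), Nat.add_sub_assoc (by omega),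
      Nat.mul_add_div (by omega), Nat.div_eq_of_lt (by omega), add_zero]
  have hn : nVal r δ ti k = k + (k / r) * ti * (δ - 1) + (k / r / r) * (δ - 1) := by
    rw [nVal, hc, bVal]
  have hr0 : (r : ℚ) ≠ 0 := by positivity
  have hnQ : (nVal r δ ti k : ℚ) =
      (k : ℚ) * (1 + ((ti * (δ - 1) : ℕ) : ℚ) / (r : ℚ)
        + (((δ - 1 : ℕ)) : ℚ) / (r : ℚ) ^ 2) := by
    rw [hn]
    have h1 : ((k / r : ℕ) : ℚ) = k / r := Nat.cast_div hk hr0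
    have h2 : ((k / r / r : ℕ) : ℚ) = (k / r : ℚ) / r := by rw [Nat.cast_div hrs hr0, h1]
    simp only [Nat.cast_add, Nat.cast_mul, h1, h2]
    field_simp
  refine ⟨slrc_main r δ ti k hδ Q (fun x hx h0 => ?_) L hLsub hLcard hpt hmeet hcr, hn, hnQ, ?_⟩
  · have := hQ.1 x hx h0
    omega
  · have hk' : (k : ℚ) ≠ 0 := by positivity
    rw [hnQ, div_mul_eq_div_div, div_self hk', one_div]
end
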